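/- arXiv:2212.01554 — 9 statements merged into one kernel-verified Lean document; each statement's English description precedes it below -/
import Mathlib

section
/- Let N ≥ 1 be a natural number, let a_1, …, a_N be real numbers, and let β be a real number with 0 < β ≤ 1/N. Then the infimum over t ∈ ℝ of H(t) = (1/N)·∑_{i=1}^N max(a_i + t, 0) − β·t equals β·max_{1 ≤ i ≤ N} a_i. -/
/-!
Let `M = a j` be the maximum. Since `β ≤ 1/N` and the sum is nonnegative, keeping only its `j`-th
term gives `H(t) ≥ β (M + t) - β t = β M` for every `t`. At `t = -M` every term of the sum
vanishes, so `H(-M) = β M` and the infimum is attained there.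
-/

/-- For `N ≥ 1` real numbers `a 1, …, a N` and `0 < β ≤ 1/N`, the infimum over
`t ∈ ℝ` of `H(t) = (1/N)·∑ i, max (a i + t) 0 − β·t` equals `β · max_i a i`. -/
theorem cvar_inf_eq_beta_mul_max (N : ℕ) (hN : 1 ≤ N) (a : Fin N → ℝ) (β : ℝ)
    (hβ0 : 0 < β) (hβN : β ≤ 1 / (N : ℝ)) :
    (⨅ t : ℝ, ((1 / (N : ℝ)) * ∑ i, max (a i + t) 0 - β * t)) = β * ⨆ i, a i := by
  haveI : Nonempty (Fin N) := ⟨⟨0, hN⟩⟩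
  obtain ⟨j, hj⟩ := exists_eq_ciSup_of_finite (f := a)
  have hmax : ∀ i, a i ≤ a j := fun i => by
    rw [hj]
    exact le_ciSup (Set.finite_range a).bddAbove i
  rw [← hj]
  have hlow : ∀ t : ℝ, β * a j ≤ (1 / (N : ℝ)) * ∑ i, max (a i + t) 0 - β * t := by
    intro t
    have hterm : a j + t ≤ ∑ i, max (a i + t) 0 :=
      (le_max_left _ _).trans
        (Finset.single_le_sum (f := fun i => max (a i + t) 0)
          (fun i _ => le_max_right _ _) (Finset.mem_univ j))
    have hsum : 0 ≤ ∑ i, max (a i + t) 0 := Finset.sum_nonneg fun i _ => le_max_right _ _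
    have hscale := mul_le_mul_of_nonneg_right hβN hsum
    have hβterm := mul_le_mul_of_nonneg_left hterm hβ0.le
    linarith
  apply le_antisymm
  · refine (ciInf_le ⟨β * a j, ?_⟩ (-a j)).trans_eq ?_
    · rintro _ ⟨t, rfl⟩
      exact hlow t
    · have hzero : ∑ i, max (a i + -a j) 0 = 0 :=
        Finset.sum_eq_zero fun i _ => max_eq_right (by linarith [hmax i])
      rw [hzero]
      ring
  · exact le_ciInf hlow
end

section
/- Let N ≥ 1 be a natural number, let a_1, …, a_N be real numbers, and let β be a real number with 0 < β ≤ 1/N. Then inf_{t ∈ ℝ} [(1/N)·∑_{i=1}^N max(a_i + t, 0) − β·t] ≤ 0 holds if and only if max_{1 ≤ i ≤ N} a_i ≤ 0. -/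
/-!
Write `H t` for the objective. Because `β ≤ 1/N`, `H t ≥ β * max (a i + t) 0 - β * t ≥ β * a i`
for all `i` and `t` (`mul_le_cvar_objective`), so `H` is bounded below and `inf H ≤ 0` forces every
`a i ≤ 0`. Conversely, if every `a i ≤ 0` then `H 0 = 0`, whence `inf H ≤ 0`.
-/

/-- Since `β ≤ 1/N`, a single summand already dominates the linear term, so `β * a i` is a lower
bound of the CVaR objective for every `i`. -/
lemma mul_le_cvar_objective {N : ℕ} (a : Fin N → ℝ) {β : ℝ}
    (hβ0 : 0 < β) (hβN : β ≤ 1 / (N : ℝ)) (i : Fin N) (t : ℝ) :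
    β * a i ≤ (1 / (N : ℝ)) * ∑ j, max (a j + t) 0 - β * t := by
  have h1 : max (a i + t) 0 ≤ ∑ j, max (a j + t) 0 :=
    Finset.single_le_sum (f := fun j => max (a j + t) 0)
      (fun j _ => le_max_right _ _) (Finset.mem_univ i)
  have h2 : β * max (a i + t) 0 ≤ (1 / (N : ℝ)) * ∑ j, max (a j + t) 0 :=
    mul_le_mul hβN h1 (le_max_right _ _) (hβ0.le.trans hβN)
  have h3 : β * (a i + t) ≤ β * max (a i + t) 0 :=
    mul_le_mul_of_nonneg_left (le_max_left _ _) hβ0.le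
  linarith

/-- For `N ≥ 1` real numbers `a 1, …, a N` and `0 < β ≤ 1/N`,
`inf_t [(1/N)·∑ i, max (a i + t) 0 − β·t] ≤ 0` holds iff `max_i a i ≤ 0`. -/
theorem cvar_inf_nonpos_iff_max_nonpos (N : ℕ) (hN : 1 ≤ N) (a : Fin N → ℝ) (β : ℝ)
    (hβ0 : 0 < β) (hβN : β ≤ 1 / (N : ℝ)) :
    (⨅ t : ℝ, ((1 / (N : ℝ)) * ∑ i, max (a i + t) 0 - β * t)) ≤ 0 ↔ (⨆ i, a i) ≤ 0 := by
  have : Nonempty (Fin N) := ⟨⟨0, hN⟩⟩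
  constructor
  · intro h
    refine ciSup_le fun i => ?_
    have hi : β * a i ≤ 0 := (le_ciInf (mul_le_cvar_objective a hβ0 hβN i)).trans h
    exact nonpos_of_mul_nonpos_right hi hβ0
  · intro h
    have ha : ∀ i, a i ≤ 0 := fun i => (le_ciSup (Set.finite_range a).bddAbove i).trans h
    have hbdd : BddBelow (Set.range fun t : ℝ =>
        (1 / (N : ℝ)) * ∑ i, max (a i + t) 0 - β * t) := by
      refine ⟨β * a ⟨0, hN⟩, ?_⟩
      rintro _ ⟨t, rfl⟩
      exact mul_le_cvar_objective a hβ0 hβN _ t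
    -- All summands vanish at `t = 0`, so the objective is `0` there.
    refine (ciInf_le hbdd 0).trans ?_
    simp [ha]
end

section
/- Let N ≥ 1 be a natural number, let a_1 ≥ a_2 ≥ … ≥ a_N be real numbers sorted in non-increasing order, let β ∈ (0,1), and let k ∈ {1,…,N} satisfy (k−1)/N < β and β ≤ k/N. Then t* = −a_k is a global minimizer of the function H(t) = (1/N)·∑_{i=1}^N max(a_i + t, 0) − β·t, i.e., H(−a_k) ≤ H(t) for all t ∈ ℝ. -/
/-!
The objective is convex and piecewise linear, and `0` is a subgradient of it at `-a k`. Concretely,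
give the `i`-th summand the slope `w i`, equal to `1` for `i < k`, to
`N * β - k ∈ (0, 1]` for `i = k`, and to `0` for `i > k`. Each `w i` is a subgradient of
`t ↦ max (a i + t) 0` at `-a k`, and the slopes add up to `N * β`, which cancels the linear
term `-β * t`.
-/

/-- Let `a 0 ≥ a 1 ≥ … ≥ a (N-1)` be sorted in non-increasing order (0-indexed,
so `a k` here is the (k+1)-st value `a_{k+1}` of the 1-indexed statement), `β ∈ (0,1)`, and let
the (1-indexed) index `k+1 ∈ {1,…,N}` satisfy `((k+1)−1)/N < β` and `β ≤ (k+1)/N`.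
Then `t* = −a k` is a global minimizer of `H(t) = (1/N)·∑ i, max (a i + t) 0 − β·t`. -/
theorem cvar_minimizer (N : ℕ) (hN : 1 ≤ N) (a : Fin N → ℝ) (ha : Antitone a)
    (β : ℝ) (hβ0 : 0 < β) (hβ1 : β < 1)
    (k : Fin N) (hk1 : ((k : ℕ) : ℝ) / (N : ℝ) < β)
    (hk2 : β ≤ (((k : ℕ) : ℝ) + 1) / (N : ℝ)) :
    ∀ t : ℝ,
      (1 / (N : ℝ)) * ∑ i, max (a i + -(a k)) 0 - β * (-(a k))
        ≤ (1 / (N : ℝ)) * ∑ i, max (a i + t) 0 - β * t := by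
  intro t
  have hNpos : (0 : ℝ) < N := by exact_mod_cast hN
  rw [div_lt_iff₀ hNpos] at hk1
  rw [le_div_iff₀ hNpos] at hk2
  set w : Fin N → ℝ := fun i =>
    (if i < k then 1 else 0) + (if i = k then β * N - (k : ℕ) else 0) with hw
  have hsum : ∑ i, w i = β * N := by
    have hcard : ∑ i : Fin N, (if i < k then (1 : ℝ) else 0) = (k : ℕ) := by
      rw [Finset.sum_boole, Finset.filter_gt_eq_Iio, Fin.card_Iio]
    rw [hw, Finset.sum_add_distrib, hcard, Finset.sum_ite_eq' Finset.univ k]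
    simp
  have hpt : ∀ i, max (a i + -(a k)) 0 + w i * (t + a k) ≤ max (a i + t) 0 := by
    intro i
    rcases lt_trichotomy i k with h | h | h
    · have hwi : w i = 1 := by simp [hw, h, h.ne]
      rw [hwi, max_eq_left (by linarith [ha h.le])]
      linarith [le_max_left (a i + t) 0]
    · subst h
      have hwi : w i = β * N - (i : ℕ) := by simp [hw]
      rw [hwi, add_neg_cancel, max_self]
      rcases le_total 0 (t + a i) with hs | hs
      · nlinarith [le_max_left (a i + t) 0]
      · nlinarith [le_max_right (a i + t) 0]
    · have hwi : w i = 0 := by simp [hw, h.not_gt, h.ne']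
      rw [hwi, max_eq_right (by linarith [ha h.le])]
      linarith [le_max_right (a i + t) 0]
  have hle := Finset.sum_le_sum fun i (_ : i ∈ Finset.univ) => hpt i
  rw [Finset.sum_add_distrib, ← Finset.sum_mul, hsum] at hle
  have hmul := mul_le_mul_of_nonneg_left hle (one_div_nonneg.mpr hNpos.le)
  have hcancel : 1 / (N : ℝ) * (β * N * (t + a k)) = β * (t + a k) := by
    field_simp
  rw [mul_add, hcancel] at hmul
  linarith
end

section
/- Let N ≥ 1 be a natural number, let a_1 ≥ a_2 ≥ … ≥ a_N be real numbers sorted in non-increasing order, let β ∈ (0,1), and let k ∈ {1,…,N} satisfy (k−1)/N < β and β ≤ k/N. Then inf_{t ∈ ℝ} [(1/N)·∑_{i=1}^N max(a_i + t, 0) − β·t] = (1/N)·∑_{i=1}^{k} (a_i − a_k) + β·a_k. In particular, the infimum is ≤ 0 if and only if (1/N)·∑_{i=1}^{k} (a_i − a_k) + β·a_k ≤ 0. -/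
/-!
The objective `H` is convex and piecewise linear, with minimizer `t = -a k`. Dropping all but the
terms of an index set `S` from the sum and replacing `max (a i + t) 0` by `a i + t` gives an affine
lower bound for the sum. With `s = a k + t`, the choice `S = {i ≤ k}` gives slope `k + 1 ≥ N β` in
`s`, which settles `s ≥ 0`; the choice `S = {i < k}` gives slope `k ≤ N β`, which settles `s ≤ 0`.
Both bounds have the value `∑ i ≤ k, (a i - a k)` at `s = 0`, where it is attained.
-/

/-- Any subfamily of the positive parts, written relative to a base value `c`, bounds the full sum
from below by an affine function of `t` with slope `S.card`. -/
lemma affine_le_sum_max {N : ℕ} (a : Fin N → ℝ) (S : Finset (Fin N)) (c t : ℝ) :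
    ∑ i ∈ S, (a i - c) + S.card * (c + t) ≤ ∑ i, max (a i + t) 0 := by
  calc ∑ i ∈ S, (a i - c) + S.card * (c + t) = ∑ i ∈ S, (a i + t) := by
        rw [← nsmul_eq_mul, ← Finset.sum_const, ← Finset.sum_add_distrib]
        exact Finset.sum_congr rfl fun i _ => by ring
    _ ≤ ∑ i ∈ S, max (a i + t) 0 := Finset.sum_le_sum fun i _ => le_max_left _ _
    _ ≤ ∑ i, max (a i + t) 0 :=
        Finset.sum_le_sum_of_subset_of_nonneg (Finset.subset_univ S)
          fun i _ _ => le_max_right _ _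

/-- At the minimizer `t = -a k` the positive parts of the indices above `k` vanish. -/
lemma sum_max_at_minimizer {N : ℕ} (a : Fin N → ℝ) (ha : Antitone a) (k : Fin N) :
    ∑ i, max (a i + -a k) 0 = ∑ i ∈ Finset.Iic k, (a i - a k) := by
  rw [← Finset.sum_subset (Finset.subset_univ (Finset.Iic k))]
  · refine Finset.sum_congr rfl fun i hi => ?_
    have := ha (Finset.mem_Iic.1 hi)
    rw [max_eq_left (by linarith), sub_eq_add_neg]
  · intro i _ hi
    have := ha (not_le.1 (fun h => hi (Finset.mem_Iic.2 h))).le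
    exact max_eq_right (by linarith)

/-- With `a` sorted non-increasingly (0-indexed: `a k` is the 1-indexed `a_{k+1}`),
`β ∈ (0,1)` and the 1-indexed index `k+1 ∈ {1,…,N}` satisfying `((k+1)−1)/N < β ≤ (k+1)/N`,
the infimum of `H(t) = (1/N)·∑ i, max (a i + t) 0 − β·t` equals
`(1/N)·∑_{i ≤ k} (a i − a k) + β·a k`, and in particular it is `≤ 0` iff this quantity is. -/
theorem cvar_inf_value (N : ℕ) (hN : 1 ≤ N) (a : Fin N → ℝ) (ha : Antitone a)
    (β : ℝ) (hβ0 : 0 < β) (hβ1 : β < 1)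
    (k : Fin N) (hk1 : ((k : ℕ) : ℝ) / (N : ℝ) < β)
    (hk2 : β ≤ (((k : ℕ) : ℝ) + 1) / (N : ℝ)) :
    (⨅ t : ℝ, ((1 / (N : ℝ)) * ∑ i, max (a i + t) 0 - β * t))
        = (1 / (N : ℝ)) * (∑ i ∈ Finset.Iic k, (a i - a k)) + β * a k
      ∧ ((⨅ t : ℝ, ((1 / (N : ℝ)) * ∑ i, max (a i + t) 0 - β * t)) ≤ 0
        ↔ (1 / (N : ℝ)) * (∑ i ∈ Finset.Iic k, (a i - a k)) + β * a k ≤ 0) := by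
  have hN0 : (0 : ℝ) < N := by exact_mod_cast hN
  have hk1' : (k : ℝ) < β * N := (div_lt_iff₀ hN0).1 hk1
  have hk2' : β * N ≤ (k : ℝ) + 1 := (le_div_iff₀ hN0).1 hk2
  have hlow : ∀ t : ℝ, (1 / (N : ℝ)) * (∑ i ∈ Finset.Iic k, (a i - a k)) + β * a k
      ≤ (1 / (N : ℝ)) * ∑ i, max (a i + t) 0 - β * t := by
    intro t
    have key : ∑ i ∈ Finset.Iic k, (a i - a k) + β * N * (a k + t)
        ≤ ∑ i, max (a i + t) 0 := by
      rcases le_total 0 (a k + t) with hs | hs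
      · have h := affine_le_sum_max a (Finset.Iic k) (a k) t
        rw [Fin.card_Iic] at h
        push_cast at h
        linarith [mul_le_mul_of_nonneg_right hk2' hs]
      · have h := affine_le_sum_max a (Finset.Iio k) (a k) t
        -- The term `i = k` is zero, so it may be added to the sum over `i < k`.
        have hsum : ∑ i ∈ Finset.Iic k, (a i - a k) = ∑ i ∈ Finset.Iio k, (a i - a k) := by
          rw [← Finset.Iio_insert, Finset.sum_insert (by simp), sub_self, zero_add]
        rw [Fin.card_Iio] at h
        linarith [mul_le_mul_of_nonpos_right hk1'.le hs]
    have h := mul_le_mul_of_nonneg_left key (one_div_pos.2 hN0).le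
    have e : 1 / (N : ℝ) * (∑ i ∈ Finset.Iic k, (a i - a k) + β * N * (a k + t))
        = 1 / (N : ℝ) * (∑ i ∈ Finset.Iic k, (a i - a k)) + β * (a k + t) := by
      field_simp
    linarith
  have hinf : (⨅ t : ℝ, ((1 / (N : ℝ)) * ∑ i, max (a i + t) 0 - β * t))
      = (1 / (N : ℝ)) * (∑ i ∈ Finset.Iic k, (a i - a k)) + β * a k := by
    apply le_antisymm
    · refine (ciInf_le ⟨_, Set.forall_mem_range.2 hlow⟩ (-a k)).trans_eq ?_
      rw [sum_max_at_minimizer a ha k]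
      ring
    · exact le_ciInf hlow
  exact ⟨hinf, by rw [hinf]⟩
end

section
/- Let E be a real vector space, let N ≥ 1, let β ∈ (0,1), and for each i ∈ {1,…,N} let g_i : E → ℝ be a convex function. Then the function z ↦ inf_{t ∈ ℝ} [(1/N)·∑_{i=1}^N max(g_i(z) + t, 0) − β·t] is convex on E. -/
/-!
The objective `F z t = (1/N) ∑ i, max (g i z + t) 0 - β t` is jointly convex in `(z, t)`, and
partial minimization of a jointly convex function is convex provided the infimum is finite.
Finiteness matters here, since the infimum of a family of reals unbounded below is `0` by
convention; it holds because `max x 0 ≥ β x` for `β ∈ [0, 1]`, whence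
`F z t ≥ (β/N) ∑ i, g i z`.
-/

/-- The CVaR objective is bounded below in `t` by `β` times the sample mean. -/
lemma cvar_objective_bddBelow (N : ℕ) (hN : 1 ≤ N) (β : ℝ) (hβ0 : 0 < β) (hβ1 : β < 1)
    (a : Fin N → ℝ) :
    BddBelow (Set.range fun t : ℝ => (1 / (N : ℝ)) * ∑ i, max (a i + t) 0 - β * t) := by
  have hN0 : (0 : ℝ) < N := by exact_mod_cast hN
  refine ⟨(1 / (N : ℝ)) * ∑ i, β * a i, ?_⟩
  rintro _ ⟨t, rfl⟩
  have hsum : ∑ i, (β * a i + β * t) ≤ ∑ i, max (a i + t) 0 := by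
    refine Finset.sum_le_sum fun i _ => ?_
    rcases le_total 0 (a i + t) with h | h
    · rw [max_eq_left h]; nlinarith
    · rw [max_eq_right h]; nlinarith
  rw [Finset.sum_add_distrib, Finset.sum_const, Finset.card_univ, Fintype.card_fin,
    nsmul_eq_mul] at hsum
  have h := mul_le_mul_of_nonneg_left hsum (one_div_pos.mpr hN0).le
  have hc : 1 / (N : ℝ) * (N * (β * t)) = β * t := by field_simp
  rw [mul_add, hc] at h
  change _ ≤ (1 / (N : ℝ)) * ∑ i, max (a i + t) 0 - β * t
  linarith

/-- If `E` is a real vector space and each `g i : E → ℝ` is convex, then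
`z ↦ inf_t [(1/N)·∑ i, max (g i z + t) 0 − β·t]` is convex on `E`. -/
theorem cvar_convex_in_decision {E : Type*} [AddCommGroup E] [Module ℝ E]
    (N : ℕ) (hN : 1 ≤ N) (β : ℝ) (hβ0 : 0 < β) (hβ1 : β < 1)
    (g : Fin N → E → ℝ) (hg : ∀ i, ConvexOn ℝ Set.univ (g i)) :
    ConvexOn ℝ Set.univ
      (fun z : E => ⨅ t : ℝ, ((1 / (N : ℝ)) * ∑ i, max (g i z + t) 0 - β * t)) := by
  refine ⟨convex_univ, fun x _ y _ a b ha hb hab => ?_⟩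
  simp only [smul_eq_mul]
  rw [Real.mul_iInf_of_nonneg ha, Real.mul_iInf_of_nonneg hb]
  refine le_ciInf_add_ciInf fun s t => ?_
  -- The convex combination `a s + b t` is a competitor in the infimum at `a x + b y`.
  refine (ciInf_le (cvar_objective_bddBelow N hN β hβ0 hβ1 fun i => g i (a • x + b • y))
    (a * s + b * t)).trans ?_
  have hsum : ∑ i, max (g i (a • x + b • y) + (a * s + b * t)) 0 ≤
      a * ∑ i, max (g i x + s) 0 + b * ∑ i, max (g i y + t) 0 := by
    rw [Finset.mul_sum, Finset.mul_sum, ← Finset.sum_add_distrib]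
    refine Finset.sum_le_sum fun i _ => max_le ?_ (by positivity)
    have hconv := (hg i).2 (Set.mem_univ x) (Set.mem_univ y) ha hb hab
    simp only [smul_eq_mul] at hconv
    have h1 := mul_le_mul_of_nonneg_left (le_max_left (g i x + s) 0) ha
    have h2 := mul_le_mul_of_nonneg_left (le_max_left (g i y + t) 0) hb
    linarith
  have h := mul_le_mul_of_nonneg_left hsum (show (0 : ℝ) ≤ 1 / (N : ℝ) by positivity)
  linarith
end

section
/- Let n, m, N ≥ 1 be natural numbers, let 0 < β ≤ 1/N and ε > 0 be real numbers, let V : ℝⁿ → ℝ be differentiable, let f : ℝⁿ → ℝⁿ and d : ℝⁿ → ℝ^{n×m} be functions, and let ξ_1, …, ξ_N ∈ ℝ^m. Define G(x, ξ) = ∇V(x)ᵀ(f(x) + d(x)ξ) + ε‖x‖₂² for x ∈ ℝⁿ, ξ ∈ ℝ^m. Then the condition 'for all x ≠ 0, inf_{t ∈ ℝ} [(1/N)·∑_{i=1}^N max(G(x, ξ_i) + t, 0) − t·β] ≤ 0' holds if and only if the condition 'for all x ≠ 0, max_{1 ≤ i ≤ N} β·(∇V(x)ᵀ(f(x) + d(x)ξ_i)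 + ε‖x‖₂²) ≤ 0' holds. -/
/-!
The two conditions agree pointwise in `x`, because for `0 < β ≤ 1/N` the empirical CVaR
objective `φ t = (1/N) ∑ i, max (g i + t) 0 - t β` has minimum value exactly `max_i β g i`.
A single term of the sum already gives
`φ t ≥ β (g i + t) - t β = β g i` for every `t` and `i`, which is where `β ≤ 1/N` enters.
Conversely, at `t = -max_i g i` all the positive parts vanish and `φ t = β max_i g i`.
-/

/-- One sample bounds the CVaR objective from below, uniformly in `t`. -/
lemma cvar_objective_ge {N : ℕ} {β : ℝ} (hβ0 : 0 < β) (hβN : β ≤ 1 / (N : ℝ))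
    (g : Fin N → ℝ) (i : Fin N) (t : ℝ) :
    β * g i ≤ (1 / (N : ℝ)) * ∑ j, max (g j + t) 0 - t * β := by
  have hsingle : max (g i + t) 0 ≤ ∑ j, max (g j + t) 0 :=
    Finset.single_le_sum (f := fun j => max (g j + t) 0)
      (fun j _ => le_max_right _ _) (Finset.mem_univ i)
  have hsum : β * max (g i + t) 0 ≤ (1 / (N : ℝ)) * ∑ j, max (g j + t) 0 :=
    mul_le_mul hβN hsingle (le_max_right _ _) (by positivity)
  rcases le_total 0 (g i + t) with h | h
  · rw [max_eq_left h] at hsum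
    linarith
  · rw [max_eq_right h] at hsum
    nlinarith

/-- For risk level `0 < β ≤ 1/N` the empirical CVaR is the scaled worst case. -/
lemma cvar_eq_max {N : ℕ} (hN : 1 ≤ N) {β : ℝ} (hβ0 : 0 < β) (hβN : β ≤ 1 / (N : ℝ))
    (g : Fin N → ℝ) :
    (⨅ t : ℝ, ((1 / (N : ℝ)) * ∑ i, max (g i + t) 0 - t * β)) = ⨆ i, β * g i := by
  haveI : Nonempty (Fin N) := ⟨⟨0, hN⟩⟩
  obtain ⟨i₀, hi₀⟩ := Finite.exists_max g
  apply le_antisymm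
  · have hbdd : BddBelow (Set.range fun t : ℝ =>
        (1 / (N : ℝ)) * ∑ i, max (g i + t) 0 - t * β) :=
      ⟨β * g i₀, by rintro _ ⟨t, rfl⟩; exact cvar_objective_ge hβ0 hβN g i₀ t⟩
    have hzero : ∑ i, max (g i + -g i₀) 0 = 0 :=
      Finset.sum_eq_zero fun i _ => max_eq_right (by linarith [hi₀ i])
    calc _ ≤ (1 / (N : ℝ)) * ∑ i, max (g i + -g i₀) 0 - -g i₀ * β := ciInf_le hbdd (-g i₀)
      _ = β * g i₀ := by rw [hzero]; ring
      _ ≤ ⨆ i, β * g i := le_ciSup (f := fun i => β * g i) (Set.finite_range _).bddAbove i₀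
  · exact ciSup_le fun i => le_ciInf fun t => cvar_objective_ge hβ0 hβN g i t

/-- Proposition 1, equivalence part: with
`G(x, ξ) = ∇V(x)ᵀ(f(x) + d(x)ξ) + ε‖x‖₂²`, the CVaR condition
`∀ x ≠ 0, inf_t [(1/N)·∑ i, max (G(x, ξ i) + t) 0 − t·β] ≤ 0` holds iff
`∀ x ≠ 0, max_i β·(∇V(x)ᵀ(f(x) + d(x)·ξ i) + ε‖x‖₂²) ≤ 0` holds. -/
theorem cc_sos_cvar_equivalence (n m N : ℕ) (hn : 1 ≤ n) (hm : 1 ≤ m) (hN : 1 ≤ N)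
    (β ε : ℝ) (hβ0 : 0 < β) (hβN : β ≤ 1 / (N : ℝ)) (hε : 0 < ε)
    (V : EuclideanSpace ℝ (Fin n) → ℝ) (hV : Differentiable ℝ V)
    (f : EuclideanSpace ℝ (Fin n) → EuclideanSpace ℝ (Fin n))
    (d : EuclideanSpace ℝ (Fin n) → Matrix (Fin n) (Fin m) ℝ)
    (ξ : Fin N → (Fin m → ℝ))
    (G : EuclideanSpace ℝ (Fin n) → (Fin m → ℝ) → ℝ)
    (hG : ∀ x u, G x u
      = (∑ k, gradient V x k * (f x k + ∑ j, d x k j * u j)) + ε * ‖x‖ ^ 2) :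
    (∀ x : EuclideanSpace ℝ (Fin n), x ≠ 0 →
        (⨅ t : ℝ, ((1 / (N : ℝ)) * ∑ i, max (G x (ξ i) + t) 0 - t * β)) ≤ 0)
      ↔ (∀ x : EuclideanSpace ℝ (Fin n), x ≠ 0 →
        (⨆ i, β * ((∑ k, gradient V x k * (f x k + ∑ j, d x k j * ξ i j)) + ε * ‖x‖ ^ 2))
          ≤ 0) := by
  refine forall₂_congr fun x _ => ?_
  rw [cvar_eq_max hN hβ0 hβN fun i => G x (ξ i)]
  simp only [hG]
end

section
/- Let n ≥ 1, ε > 0, let V, f_1, …, f_n be polynomials in ℝ[x_1,…,x_n] with V having zero constant term, and define the polynomial V̇ = ∑_{k=1}^n (∂V/∂x_k)·f_k. If V − ε·∑_{k=1}^n x_k² is a sum of squares and −V̇ − ε·∑_{k=1}^n x_k² is a sum of squares, then: V(0) = 0; V(x) ≥ ε‖x‖₂² > 0 for all x ≠ 0; and V̇(x) ≤ −ε‖x‖₂² < 0 for all x ≠ 0. -/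
open MvPolynomial

/-! A sum of squares is nonnegative at every point (`eval_nonneg_of_isSumSq`), so evaluating the
two SOS hypotheses at `x` gives `V(x) ≥ ε‖x‖²` and `V̇(x) ≤ -ε‖x‖²`. The margin
`ε‖x‖²` is positive away from the origin, since some coordinate of `x ≠ 0` has a positive square.
The value `V(0)` is the constant coefficient of `V`. -/

/-- Evaluation at a point maps squares to squares, so a sum of squares is pointwise nonnegative. -/
lemma eval_nonneg_of_isSumSq {σ : Type*} {p : MvPolynomial σ ℝ} (hp : IsSumSq p) (x : σ → ℝ) :
    0 ≤ eval x p := by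
  induction hp with
  | zero => simp
  | sq_add a _ ih =>
    rw [map_add, map_mul]
    exact add_nonneg (mul_self_nonneg _) ih

/-- for a polynomial system `ẋ = f(x)` with candidate polynomial Lyapunov
function `V` having zero constant term, if `V − ε·∑ k, x k²` and `−V̇ − ε·∑ k, x k²` are sums
of squares (with `V̇ = ∑ k, (∂V/∂x k)·f k`), then `V(0) = 0`, `V(x) ≥ ε‖x‖₂² > 0` for all
`x ≠ 0`, and `V̇(x) ≤ −ε‖x‖₂² < 0` for all `x ≠ 0`. -/
theorem sos_lyapunov_conditions (n : ℕ) (hn : 1 ≤ n) (ε : ℝ) (hε : 0 < ε)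
    (V : MvPolynomial (Fin n) ℝ) (f : Fin n → MvPolynomial (Fin n) ℝ)
    (hV0 : MvPolynomial.coeff 0 V = 0)
    (Vdot : MvPolynomial (Fin n) ℝ)
    (hVdot : Vdot = ∑ k, pderiv k V * f k)
    (hSOS1 : IsSumSq (V - C ε * ∑ k, (X k : MvPolynomial (Fin n) ℝ) ^ 2))
    (hSOS2 : IsSumSq (-Vdot - C ε * ∑ k, (X k : MvPolynomial (Fin n) ℝ) ^ 2)) :
    eval (0 : Fin n → ℝ) V = 0
      ∧ (∀ x : Fin n → ℝ, x ≠ 0 →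
          ε * ∑ k, x k ^ 2 ≤ eval x V ∧ 0 < ε * ∑ k, x k ^ 2)
      ∧ (∀ x : Fin n → ℝ, x ≠ 0 →
          eval x Vdot ≤ -(ε * ∑ k, x k ^ 2) ∧ -(ε * ∑ k, x k ^ 2) < 0) := by
  have pos : ∀ x : Fin n → ℝ, x ≠ 0 → 0 < ε * ∑ k, x k ^ 2 := by
    intro x hx
    obtain ⟨i, hi⟩ := Function.ne_iff.mp hx
    have hi' : x i ≠ 0 := hi
    exact mul_pos hε (Finset.sum_pos' (fun k _ => sq_nonneg (x k))
      ⟨i, Finset.mem_univ i, by positivity⟩)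
  refine ⟨?_, fun x hx => ⟨?_, pos x hx⟩, fun x hx => ⟨?_, by linarith [pos x hx]⟩⟩
  · rw [eval_zero, constantCoeff_eq, hV0]
  · have h := eval_nonneg_of_isSumSq hSOS1 x
    simp only [map_sub, map_mul, map_sum, map_pow, eval_C, eval_X] at h
    linarith
  · have h := eval_nonneg_of_isSumSq hSOS2 x
    simp only [map_sub, map_neg, map_mul, map_sum, map_pow, eval_C, eval_X] at h
    linarith
end

section
/- Let m, N ≥ 1 be natural numbers, let 0 < β ≤ 1/N and r ≥ 0 be real numbers, let c ∈ ℝ, b ∈ ℝ^m, and ξ_1, …, ξ_N ∈ ℝ^m, and set a_i = c + ∑_{j=1}^m b_j·(ξ_i)_j for each i. Then r·max_{1 ≤ j ≤ m} |b_j| + inf_{t ∈ ℝ} [(1/N)·∑_{i=1}^N max(a_i + t, 0) − β·t] ≤ 0 holds if and only if r·max_{1 ≤ j ≤ m} |b_j| + max_{1 ≤ i ≤ N} β·a_i ≤ 0. -/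
/-!
The two conditions differ only in their second summand, and these summands are equal: for
`0 < β ≤ 1/N` the empirical CVaR objective `H` has minimum value `max_i β · a i`
(`iInf_cvar_eq_iSup`), attained at `t = -max_i a i`.
-/

/-- The infimum of the empirical CVaR objective is `β · max a`: since `β ≤ 1/N`, keeping only the
`i`-th summand gives `H(t) ≥ β (a i + t) - β t = β a i` for every `t`, and at `t = -max a` all the
positive parts vanish, so `H(t) = β · max a`. -/
lemma iInf_cvar_eq_iSup (N : ℕ) (hN : 1 ≤ N) (β : ℝ) (hβ0 : 0 < β)
    (hβN : β ≤ 1 / (N : ℝ)) (a : Fin N → ℝ) :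
    (⨅ t : ℝ, ((1 / (N : ℝ)) * ∑ i, max (a i + t) 0 - β * t)) = ⨆ i, β * a i := by
  have : Nonempty (Fin N) := ⟨⟨0, hN⟩⟩
  have lower : ∀ t i, β * a i ≤ (1 / (N : ℝ)) * ∑ i, max (a i + t) 0 - β * t := by
    intro t i
    have h1 : max (a i + t) 0 ≤ ∑ i, max (a i + t) 0 :=
      Finset.single_le_sum (f := fun i => max (a i + t) 0)
        (fun _ _ => le_max_right _ _) (Finset.mem_univ i)
    have h2 : β * max (a i + t) 0 ≤ (1 / (N : ℝ)) * ∑ i, max (a i + t) 0 :=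
      mul_le_mul hβN h1 (le_max_right _ _) (by positivity)
    have h3 : β * (a i + t) ≤ β * max (a i + t) 0 :=
      mul_le_mul_of_nonneg_left (le_max_left _ _) hβ0.le
    linarith
  apply le_antisymm
  · obtain ⟨k, hk⟩ := Finite.exists_max a
    have bdd : BddBelow (Set.range fun t : ℝ =>
        (1 / (N : ℝ)) * ∑ i, max (a i + t) 0 - β * t) :=
      ⟨β * a k, by rintro _ ⟨t, rfl⟩; exact lower t k⟩
    refine (ciInf_le bdd (-a k)).trans ?_
    have h0 : ∑ i, max (a i + -a k) 0 = 0 :=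
      Finset.sum_eq_zero fun i _ => max_eq_right (by linarith [hk i])
    have h4 : β * a k ≤ ⨆ i, β * a i :=
      le_ciSup (f := fun i => β * a i) (Set.finite_range _).bddAbove k
    simp only [h0]
    linarith
  · exact le_ciInf fun t => ciSup_le fun i => lower t i

/-- real-valued equivalence underlying Proposition 2: with
`a i = c + ∑ j, b j · (ξ i) j`,
`r·max_j |b j| + inf_t [(1/N)·∑ i, max (a i + t) 0 − β·t] ≤ 0` iff
`r·max_j |b j| + max_i β·(a i) ≤ 0`. -/
theorem drcc_cvar_equivalence (m N : ℕ) (hm : 1 ≤ m) (hN : 1 ≤ N)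
    (β r : ℝ) (hβ0 : 0 < β) (hβN : β ≤ 1 / (N : ℝ)) (hr : 0 ≤ r)
    (c : ℝ) (b : Fin m → ℝ) (ξ : Fin N → (Fin m → ℝ))
    (a : Fin N → ℝ) (ha : ∀ i, a i = c + ∑ j, b j * ξ i j) :
    r * (⨆ j, |b j|)
        + (⨅ t : ℝ, ((1 / (N : ℝ)) * ∑ i, max (a i + t) 0 - β * t)) ≤ 0
      ↔ r * (⨆ j, |b j|) + (⨆ i, β * a i) ≤ 0 := by
  rw [iInf_cvar_eq_iSup N hN β hβ0 hβN a]
end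

section
/- Let (Ω, 𝓕, μ) be a probability space, let X : Ω → ℝ be an integrable random variable, and let β ∈ (0,1). If there exists t ∈ ℝ such that ∫ max(X(ω) + t, 0) dμ(ω) ≤ β·t, then μ({ω : X(ω) > 0}) ≤ β. -/
/-!
Since `(X + t)₊ ≥ 0`, the hypothesis forces `t ≥ 0`. For `t > 0`, the event `X > 0` is contained
in `(X + t)₊ ≥ t`, whose probability is at most `E[(X + t)₊] / t ≤ β` by Markov's inequality.
For `t = 0` the hypothesis says `E[X₊] = 0`, so `X ≤ 0` almost surely.
-/

open MeasureTheory

/-- on a probability space, if `X` is integrable, `β ∈ (0,1)`, and some `t ∈ ℝ`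
satisfies `∫ max (X ω + t) 0 dμ ≤ β·t`, then `μ {ω | X ω > 0} ≤ β` (the CVaR constraint is a
sufficient condition for the chance constraint). -/
theorem cvar_implies_chance_constraint {Ω : Type*} [MeasurableSpace Ω]
    (μ : Measure Ω) [IsProbabilityMeasure μ]
    (X : Ω → ℝ) (hX : Integrable X μ)
    (β : ℝ) (hβ0 : 0 < β) (hβ1 : β < 1)
    (h : ∃ t : ℝ, ∫ ω, max (X ω + t) 0 ∂μ ≤ β * t) :
    μ {ω | 0 < X ω} ≤ ENNReal.ofReal β := by
  obtain ⟨t, ht⟩ := h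
  have hint : Integrable (fun ω => max (X ω + t) 0) μ :=
    (hX.add (integrable_const t)).pos_part
  have hnn : 0 ≤ᵐ[μ] fun ω => max (X ω + t) 0 := ae_of_all _ fun ω => le_max_right _ _
  have h0 : 0 ≤ ∫ ω, max (X ω + t) 0 ∂μ := integral_nonneg_of_ae hnn
  have ht0 : 0 ≤ t := nonneg_of_mul_nonneg_right (h0.trans ht) hβ0
  rcases ht0.eq_or_lt with rfl | htpos
  · -- Markov's inequality is vacuous at level `0`; instead the positive part of `X` has integral
    -- zero, so it vanishes almost everywhere.
    have hz : ∫ ω, max (X ω + 0) 0 ∂μ = 0 := le_antisymm (by simpa using ht) h0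
    have hae := (integral_eq_zero_iff_of_nonneg_ae hnn hint).1 hz
    have hμ : μ {ω | 0 < X ω} = 0 := by
      rw [measure_eq_zero_iff_ae_notMem]
      filter_upwards [hae] with ω hω
      simpa using hω
    simp [hμ]
  · -- On `{X > 0}` the nonnegative variable `(X + t)₊` is at least `t`, so Markov at level `t`
    -- applies.
    have hM := mul_meas_ge_le_integral_of_nonneg hnn hint t
    have hle : μ.real {ω | t ≤ max (X ω + t) 0} ≤ β := by
      refine le_of_mul_le_mul_left ?_ htpos
      linarith
    calc μ {ω | 0 < X ω} ≤ μ {ω | t ≤ max (X ω + t) 0} := by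
          refine measure_mono fun ω hω => ?_
          have hω' : 0 < X ω := hω
          have hle' : t ≤ X ω + t := by linarith
          exact hle'.trans (le_max_left _ _)
      _ = ENNReal.ofReal (μ.real {ω | t ≤ max (X ω + t) 0}) := by simp
      _ ≤ ENNReal.ofReal β := ENNReal.ofReal_le_ofReal hle
end
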